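/- arXiv:1403.7673 — 2 statements merged into one kernel-verified Lean document; each statement's English description precedes it below -/
import Mathlib

section
/- For every integer n ≥ 2, the symmetrized polydisc 𝔾ₙ is not Gromov hyperbolic with respect to its Carathéodory distance c_{𝔾ₙ}, and it is not Gromov hyperbolic with respect to its Kobayashi distance k_{𝔾ₙ}. -/
open Metric Set

noncomputable section

/-- Inverse hyperbolic tangent: `artanh t = (1/2) * log ((1+t)/(1-t))`. -/
def artanh (x : ℝ) : ℝ := Real.log ((1 + x) / (1 - x)) / 2

variable {E : Type*} [NormedAddCommGroup E] [NormedSpace ℂ E]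

/-- The Lempert function of a set `D ⊆ E`:
`l_D(z,w) = inf { artanh |α| : ∃ φ : 𝔻 → D holomorphic, φ 0 = z, φ α = w }`. -/
def lempert (D : Set E) (z w : E) : ℝ :=
  sInf { r : ℝ | ∃ α : ℂ, ‖α‖ < 1 ∧
    (∃ φ : ℂ → E, DifferentiableOn ℂ φ (ball 0 1) ∧ MapsTo φ (ball 0 1) D ∧
      φ 0 = z ∧ φ α = w) ∧ r = artanh ‖α‖ }

/-- The Kobayashi pseudodistance: infimum of `∑ l_D(z_{i-1}, z_i)` over all finite
chains of points `z = c 0, c 1, …, c m = w` in `D`. -/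
def kobayashi (D : Set E) (z w : E) : ℝ :=
  sInf { r : ℝ | ∃ (m : ℕ) (c : ℕ → E), c 0 = z ∧ c m = w ∧ (∀ i ≤ m, c i ∈ D) ∧
    r = ∑ i ∈ Finset.range m, lempert D (c i) (c (i + 1)) }

/-- The Carathéodory pseudodistance:
`c_D(z,w) = sup { artanh |f w| : f : D → 𝔻 holomorphic, f z = 0 }`. -/
def caratheodory (D : Set E) (z w : E) : ℝ :=
  sSup { r : ℝ | ∃ f : E → ℂ, DifferentiableOn ℂ f D ∧ MapsTo f D (ball 0 1) ∧
    f z = 0 ∧ r = artanh ‖f w‖ }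

/-- `(D, d)` is Gromov hyperbolic if
`sup_{p,q,x,w ∈ D} ( min{(p,x)_w, (x,q)_w} − (p,q)_w ) < ∞`, where
`(x,y)_z = d x z + d z y - d x y` is the Gromov product. -/
def GromovHyperbolicWith (D : Set E) (d : E → E → ℝ) : Prop :=
  ∃ C : ℝ, ∀ p ∈ D, ∀ q ∈ D, ∀ x ∈ D, ∀ w ∈ D,
    min (d p w + d w x - d p x) (d x w + d w q - d x q) - (d p w + d w q - d p q) ≤ C

end

/-- The symmetrized polydisc `𝔾ₙ ⊆ ℂⁿ`: the image of the unit polydisc `𝔻ⁿ` under the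
map whose `k`-th component is the `k`-th elementary symmetric polynomial. -/
def symmetrizedPolydisc (n : ℕ) : Set (EuclideanSpace ℂ (Fin n)) :=
  { w | ∃ z : Fin n → ℂ, (∀ j, ‖z j‖ < 1) ∧
      ∀ k : Fin n, w k = ∑ s ∈ Finset.univ.powersetCard ((k : ℕ) + 1), ∏ j ∈ s, z j }

namespace SPD

lemma artanh_mono {x y : ℝ} (hx : 0 ≤ x) (hxy : x ≤ y) (hy : y < 1) : artanh x ≤ artanh y := by
  unfold artanh
  have : (1 + x) / (1 - x) ≤ (1 + y) / (1 - y) := by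
    rw [div_le_div_iff₀ (by linarith) (by linarith)]; nlinarith
  have h0 : 0 < (1 + x) / (1 - x) := div_pos (by linarith) (by linarith)
  have := Real.log_le_log h0 this
  linarith

lemma artanh_nonneg {x : ℝ} (hx : 0 ≤ x) (hy : x < 1) : 0 ≤ artanh x := by
  have := artanh_mono le_rfl hx hy
  simpa [artanh] using this

/-- half-plane estimate -/
lemma hp_est {a b : ℂ} (ha : 0 < a.re) (hb : 0 < b.re) :
    ‖(b - a) / (b + star a)‖ < 1 ∧
    (Real.log b.re - Real.log a.re) / 2 ≤ artanh ‖(b - a) / (b + star a)‖ := by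
  set ζ := (b - a) / (b + star a) with hζ
  have hne : b + star a ≠ 0 := by
    intro h
    have := congrArg Complex.re h
    simp at this
    linarith
  have hlt : ‖ζ‖ < 1 := by
    rw [hζ, norm_div, div_lt_one (norm_pos_iff.mpr hne)]
    rw [← sq_lt_sq₀ (norm_nonneg _) (norm_nonneg _), Complex.sq_norm, Complex.sq_norm,
      Complex.normSq_apply, Complex.normSq_apply]
    simp
    nlinarith [mul_pos ha hb]
  refine ⟨hlt, ?_⟩
  have e1 : b - a = ζ * (b + star a) := by rw [hζ]; field_simp
  have e2 : (b - (a.im : ℂ) * Complex.I) * (1 - ζ) = (a.re : ℂ) * (1 + ζ) := by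
    have h1 : a = a.re + a.im * Complex.I := (Complex.re_add_im a).symm
    have h2 : star a = a.re - a.im * Complex.I := by
      apply Complex.ext <;> simp
    rw [h2] at e1
    linear_combination e1 + h1
  have e3 := congrArg norm e2
  rw [norm_mul, norm_mul, Complex.norm_real, Real.norm_of_nonneg ha.le] at e3
  have g1 : b.re ≤ ‖b - (a.im : ℂ) * Complex.I‖ := by
    have := Complex.re_le_norm (b - (a.im : ℂ) * Complex.I)
    simpa using this
  have g2 : 1 - ‖ζ‖ ≤ ‖1 - ζ‖ := by simpa using norm_sub_norm_le (1:ℂ) ζ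
  have g3 : ‖1 + ζ‖ ≤ 1 + ‖ζ‖ := by simpa using norm_add_le (1:ℂ) ζ
  have key : b.re * (1 - ‖ζ‖) ≤ a.re * (1 + ‖ζ‖) := by
    calc b.re * (1 - ‖ζ‖) ≤ ‖b - (a.im : ℂ) * Complex.I‖ * ‖1 - ζ‖ := by
          apply mul_le_mul g1 g2 (by linarith) (norm_nonneg _)
      _ = a.re * ‖1 + ζ‖ := e3
      _ ≤ _ := by gcongr
  unfold artanh
  rw [← Real.log_div hb.ne' ha.ne']
  have : b.re / a.re ≤ (1 + ‖ζ‖) / (1 - ‖ζ‖) := by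
    rw [div_le_div_iff₀ ha (by linarith)]; linarith
  have := Real.log_le_log (div_pos hb ha) this
  linarith

lemma hp_abs {a b : ℂ} (ha : 0 < a.re) (hb : 0 < b.re) :
    |Real.log b.re - Real.log a.re| / 2 ≤ artanh ‖(b - a) / (b + star a)‖ := by
  have h1 := (hp_est ha hb).2
  have h2 := (hp_est hb ha).2
  have : ‖(a - b) / (a + star b)‖ = ‖(b - a) / (b + star a)‖ := by
    rw [norm_div, norm_div, norm_sub_rev, ← norm_star (a + star b), star_add, star_star, add_comm]
  rw [this] at h2
  rcases abs_cases (Real.log b.re - Real.log a.re) with h | h <;> linarith [h.1]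

section gen
variable {E : Type*} [NormedAddCommGroup E] [NormedSpace ℂ E]

/-- any two points are joined by an analytic disc -/
def Joined' (D : Set E) : Prop := ∀ z ∈ D, ∀ w ∈ D, ∃ α : ℂ, ‖α‖ < 1 ∧
    (∃ φ : ℂ → E, DifferentiableOn ℂ φ (ball 0 1) ∧ MapsTo φ (ball 0 1) D ∧
      φ 0 = z ∧ φ α = w)

lemma schwarz {D : Set E} {z w : E} {f : E → ℂ} (hf : DifferentiableOn ℂ f D)
    (hm : MapsTo f D (ball 0 1)) (hz : f z = 0) {α : ℂ} (hα : ‖α‖ < 1) {φ : ℂ → E}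
    (hφ : DifferentiableOn ℂ φ (ball 0 1)) (hφm : MapsTo φ (ball 0 1) D)
    (h0 : φ 0 = z) (h1 : φ α = w) : artanh ‖f w‖ ≤ artanh ‖α‖ := by
  apply artanh_mono (norm_nonneg _) _ hα
  have := Complex.norm_le_norm_of_mapsTo_ball (f := f ∘ φ) (R := 1) (z := α)
    (hf.comp hφ hφm) ((hm.comp hφm).mono_right ball_subset_closedBall) (by simp [h0, hz]) hα
  simpa [h1] using this

lemma carath_le {D : Set E} {z w : E} {α : ℂ} (hα : ‖α‖ < 1) {φ : ℂ → E}
    (hφ : DifferentiableOn ℂ φ (ball 0 1)) (hφm : MapsTo φ (ball 0 1) D)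
    (h0 : φ 0 = z) (h1 : φ α = w) : caratheodory D z w ≤ artanh ‖α‖ := by
  unfold caratheodory
  apply csSup_le
  · exact ⟨artanh ‖(0:ℂ)‖, fun _ => 0, by fun_prop, fun x _ => by simp, rfl, rfl⟩
  · rintro r ⟨f, hf, hm, hz, rfl⟩
    exact schwarz hf hm hz hα hφ hφm h0 h1

lemma lempert_nonneg (D : Set E) (z w : E) : 0 ≤ lempert D z w := by
  apply Real.sInf_nonneg
  rintro r ⟨α, hα, -, rfl⟩
  exact artanh_nonneg (norm_nonneg _) hα

lemma lempert_le {D : Set E} {z w : E} {α : ℂ} (hα : ‖α‖ < 1) {φ : ℂ → E}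
    (hφ : DifferentiableOn ℂ φ (ball 0 1)) (hφm : MapsTo φ (ball 0 1) D)
    (h0 : φ 0 = z) (h1 : φ α = w) : lempert D z w ≤ artanh ‖α‖ := by
  apply csInf_le
  · refine ⟨0, ?_⟩
    rintro r ⟨α, hα, -, rfl⟩
    exact artanh_nonneg (norm_nonneg _) hα
  · exact ⟨α, hα, ⟨φ, hφ, hφm, h0, h1⟩, rfl⟩

lemma kob_le {D : Set E} {z w : E} {α : ℂ} (hα : ‖α‖ < 1) {φ : ℂ → E}
    (hφ : DifferentiableOn ℂ φ (ball 0 1)) (hφm : MapsTo φ (ball 0 1) D)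
    (h0 : φ 0 = z) (h1 : φ α = w) : kobayashi D z w ≤ artanh ‖α‖ := by
  refine le_trans ?_ (lempert_le hα hφ hφm h0 h1)
  apply csInf_le
  · refine ⟨0, ?_⟩
    rintro r ⟨m, c, -, -, -, rfl⟩
    exact Finset.sum_nonneg fun _ _ => lempert_nonneg _ _ _
  · refine ⟨1, fun i => if i = 0 then z else w, by simp, by simp, ?_, by simp⟩
    intro i _
    by_cases hi : i = 0
    · simp only [hi, if_true]; rw [← h0]; exact hφm (by simp)
    · simp only [hi, if_false]; rw [← h1]; exact hφm (by simpa using hα)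

variable {D : Set E} {h : E → ℂ} (hd : DifferentiableOn ℂ h D) (hp : ∀ z ∈ D, 0 < (h z).re)

include hd hp in
lemma test_fun {z : E} (hz : z ∈ D) :
    DifferentiableOn ℂ (fun w => (h w - h z) / (h w + star (h z))) D ∧
    MapsTo (fun w => (h w - h z) / (h w + star (h z))) D (ball 0 1) ∧
    (fun w => (h w - h z) / (h w + star (h z))) z = 0 := by
  refine ⟨?_, ?_, by simp⟩
  · simp only [div_eq_mul_inv]
    refine DifferentiableOn.fun_mul (hd.sub_const _) (DifferentiableOn.fun_inv (hd.add_const _) ?_)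
    intro w hw h0
    have := congrArg Complex.re h0
    have h1 := hp z hz
    have h2 := hp w hw
    simp at this
    linarith
  · intro w hw
    simpa using (hp_est (hp z hz) (hp w hw)).1

include hd hp in
lemma le_carath (hj : Joined' D) {z w : E} (hz : z ∈ D) (hw : w ∈ D) :
    |Real.log (h w).re - Real.log (h z).re| / 2 ≤ caratheodory D z w := by
  refine (hp_abs (hp z hz) (hp w hw)).trans ?_
  apply le_csSup
  · obtain ⟨α, hα, φ, h1, h2, h3, h4⟩ := hj z hz w hw
    refine ⟨artanh ‖α‖, ?_⟩
    rintro r ⟨f, hf, hm, hz, rfl⟩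
    exact schwarz hf hm hz hα h1 h2 h3 h4
  · obtain ⟨h1, h2, h3⟩ := test_fun hd hp hz
    exact ⟨_, h1, h2, h3, rfl⟩

include hd hp in
lemma le_lempert (hj : Joined' D) {z w : E} (hz : z ∈ D) (hw : w ∈ D) :
    |Real.log (h w).re - Real.log (h z).re| / 2 ≤ lempert D z w := by
  apply le_csInf
  · obtain ⟨α, hα, hφ⟩ := hj z hz w hw
    exact ⟨_, α, hα, hφ, rfl⟩
  · rintro r ⟨α, hα, ⟨φ, g1, g2, g3, g4⟩, rfl⟩
    obtain ⟨h1, h2, h3⟩ := test_fun hd hp hz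
    exact (hp_abs (hp z hz) (hp w hw)).trans (schwarz h1 h2 h3 hα g1 g2 g3 g4)

include hd hp in
lemma le_kob (hj : Joined' D) {z w : E} (hz : z ∈ D) (hw : w ∈ D) :
    |Real.log (h w).re - Real.log (h z).re| / 2 ≤ kobayashi D z w := by
  apply le_csInf
  · refine ⟨_, 1, fun i => if i = 0 then z else w, by simp, by simp, ?_, rfl⟩
    intro i _
    by_cases hi : i = 0 <;> simp [hi, hz, hw]
  · rintro r ⟨m, c, h0, h1, hc, rfl⟩
    have key : ∀ k ≤ m, |Real.log (h (c k)).re - Real.log (h (c 0)).re| / 2 ≤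
        ∑ i ∈ Finset.range k, lempert D (c i) (c (i + 1)) := by
      intro k
      induction k with
      | zero => simp
      | succ k ih =>
        intro hk
        rw [Finset.sum_range_succ]
        have := ih (by omega)
        have h2 := le_lempert hd hp hj (hc k (by omega)) (hc (k+1) hk)
        have := abs_sub_le (Real.log (h (c (k+1))).re) (Real.log (h (c k)).re)
          (Real.log (h (c 0)).re)
        linarith
    have := key m le_rfl
    rwa [h0, h1] at this

end gen

/-- symmetrization map -/
noncomputable def sp {n : ℕ} (z : Fin n → ℂ) : EuclideanSpace ℂ (Fin n) :=
  WithLp.toLp 2 fun k => ∑ s ∈ Finset.univ.powersetCard ((k : ℕ) + 1), ∏ j ∈ s, z j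

lemma sp_mem {n : ℕ} {z : Fin n → ℂ} (hz : ∀ j, ‖z j‖ < 1) : sp z ∈ symmetrizedPolydisc n :=
  ⟨z, hz, fun _ => rfl⟩

lemma mem_iff {n : ℕ} {w} (hw : w ∈ symmetrizedPolydisc n) :
    ∃ z : Fin n → ℂ, (∀ j, ‖z j‖ < 1) ∧ w = sp z := by
  obtain ⟨z, hz, h⟩ := hw
  exact ⟨z, hz, by ext k; exact h k⟩

lemma sp_diff {n : ℕ} {ψ : ℂ → Fin n → ℂ} (h : ∀ j, DifferentiableOn ℂ (fun ζ => ψ ζ j) (ball 0 1)) :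
    DifferentiableOn ℂ (fun ζ => sp (ψ ζ)) (ball 0 1) := by
  rw [differentiableOn_euclidean]
  intro k
  simp only [sp]
  apply DifferentiableOn.fun_sum
  intro s _
  apply DifferentiableOn.fun_finsetProd
  intro j _
  exact h j

lemma moeb_lt {a b : ℂ} (ha : ‖a‖ < 1) (hb : ‖b‖ < 1) :
    1 + star a * b ≠ 0 ∧ ‖(b + a) / (1 + star a * b)‖ < 1 := by
  have hne : 1 + star a * b ≠ 0 := by
    intro h
    have : star a * b = -1 := by linear_combination h
    have := congrArg norm this
    rw [norm_mul, norm_star] at this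
    simp at this
    nlinarith [norm_nonneg a, norm_nonneg b]
  refine ⟨hne, ?_⟩
  rw [norm_div, div_lt_one (norm_pos_iff.mpr hne)]
  rw [← sq_lt_sq₀ (norm_nonneg _) (norm_nonneg _), Complex.sq_norm, Complex.sq_norm,
      Complex.normSq_apply, Complex.normSq_apply]
  have h1 : Complex.normSq a < 1 := by
    rw [← Complex.sq_norm]; nlinarith [norm_nonneg a]
  have h2 : Complex.normSq b < 1 := by
    rw [← Complex.sq_norm]; nlinarith [norm_nonneg b]
  rw [Complex.normSq_apply] at h1 h2
  simp
  nlinarith [mul_pos (sub_pos.mpr h1) (sub_pos.mpr h2)]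

lemma joined (n : ℕ) : Joined' (symmetrizedPolydisc n) := by
  intro z _ w _
  obtain ⟨z, hz, rfl⟩ := mem_iff ‹z ∈ _›
  obtain ⟨w, hw, rfl⟩ := mem_iff ‹w ∈ _›
  let m : Fin n → ℂ := fun j => (w j + -z j) / (1 + star (-z j) * w j)
  have hm : ∀ j, ‖m j‖ < 1 := fun j => (moeb_lt (by simpa using hz j) (hw j)).2
  obtain ⟨R, hR0, hR1, hR⟩ : ∃ R : ℝ, 0 < R ∧ R < 1 ∧ ∀ j, ‖m j‖ ≤ R := by
    have : ∀ᶠ R in nhdsWithin (1:ℝ) (Iio 1), 0 < R ∧ R < 1 ∧ ∀ j, ‖m j‖ ≤ R := by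
      refine Filter.Eventually.and ?_ (Filter.Eventually.and self_mem_nhdsWithin ?_)
      · exact nhdsWithin_le_nhds (lt_mem_nhds one_pos)
      · rw [Filter.eventually_all]
        intro j
        exact nhdsWithin_le_nhds ((lt_mem_nhds (hm j)).mono fun _ h => h.le)
    exact this.exists
  have hq : ∀ j, ∀ ζ ∈ ball (0:ℂ) 1, ‖ζ * (m j / R)‖ < 1 := by
    intro j ζ hζ
    have hζ : ‖ζ‖ < 1 := by simpa using hζ
    have : ‖m j / R‖ ≤ 1 := by
      rw [norm_div, Complex.norm_real, Real.norm_of_nonneg hR0.le, div_le_one hR0]; exact hR j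
    rw [norm_mul]
    nlinarith [norm_nonneg ζ, norm_nonneg (m j / R)]
  refine ⟨R, by simpa [abs_of_pos hR0] using hR1,
    fun ζ => sp fun j => (ζ * (m j / R) + z j) / (1 + star (z j) * (ζ * (m j / R))), ?_, ?_, ?_, ?_⟩
  · apply sp_diff
    intro j
    apply DifferentiableOn.fun_div (by fun_prop) (by fun_prop)
    intro ζ hζ
    exact (moeb_lt (hz j) (hq j ζ hζ)).1
  · intro ζ hζ
    exact sp_mem fun j => (moeb_lt (hz j) (hq j ζ hζ)).2
  · simp
  · have hRne : (R:ℂ) ≠ 0 := by exact_mod_cast hR0.ne'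
    refine congrArg sp (funext fun j => ?_)
    rw [mul_div_cancel₀ _ hRne]
    have h2 := (moeb_lt (hz j) (hm j)).1
    have h1 := (moeb_lt (a := -z j) (by simpa using hz j) (hw j)).1
    rw [div_eq_iff h2]
    have e : m j * (1 + star (-z j) * w j) = w j + -z j := div_mul_cancel₀ _ h1
    rw [star_neg] at e
    linear_combination e

/-- monic polynomial with roots z as function of w = sp z -/
noncomputable def P {n : ℕ} (t : ℂ) (w : EuclideanSpace ℂ (Fin n)) : ℂ :=
  t ^ n + ∑ k : Fin n, (-1) ^ ((k : ℕ) + 1) * t ^ (n - ((k : ℕ) + 1)) * w k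

noncomputable def Q {n : ℕ} (t : ℂ) (w : EuclideanSpace ℂ (Fin n)) : ℂ :=
  (n : ℂ) * t ^ (n - 1) + ∑ k : Fin n, (-1) ^ ((k : ℕ) + 1) *
    (((n - ((k : ℕ) + 1) : ℕ) : ℂ) * t ^ (n - ((k : ℕ) + 1) - 1)) * w k

lemma P_eq {n : ℕ} (t : ℂ) (z : Fin n → ℂ) : P t (sp z) = ∏ j, (t - z j) := by
  have : ∏ j, (t - z j) = ∏ j, (-z j + t) := by congr 1; ext j; ring
  rw [this, Finset.prod_add, Finset.sum_powerset, Finset.sum_range_succ', Finset.card_univ,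
    Fintype.card_fin, Finset.sum_range]
  simp only [P, sp]
  rw [add_comm]
  congr 1
  · apply Finset.sum_congr rfl
    intro k _
    rw [Finset.mul_sum]
    apply Finset.sum_congr rfl
    intro s hs
    have hc := (Finset.mem_powersetCard.mp hs).2
    rw [Finset.prod_const, Finset.card_sdiff, Finset.prod_neg, hc]
    simp [hc]
    ring
  · simp

lemma Q_eq {n : ℕ} (t : ℂ) (z : Fin n → ℂ) :
    Q t (sp z) = ∑ i, ∏ j ∈ Finset.univ.erase i, (t - z j) := by
  have h1 : HasDerivAt (fun t => P t (sp z)) (Q t (sp z)) t := by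
    unfold P Q
    apply HasDerivAt.add (hasDerivAt_pow n t)
    apply HasDerivAt.fun_sum
    intro k _
    exact ((hasDerivAt_pow _ t).const_mul _).mul_const _
  have h2 : HasDerivAt (fun t => ∏ j, (t - z j))
      (∑ i, (∏ j ∈ Finset.univ.erase i, (t - z j)) • (1:ℂ)) t := by
    apply HasDerivAt.fun_finsetProd
    intro i _
    exact (hasDerivAt_id t).sub_const _
  simp only [P_eq] at h1
  simpa using h1.unique h2

noncomputable def H {n : ℕ} (t : ℂ) (w : EuclideanSpace ℂ (Fin n)) : ℂ :=
  2 * t * (Q t w / P t w) - n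

lemma ne_of {t z : ℂ} (ht : ‖t‖ = 1) (hz : ‖z‖ < 1) : t - z ≠ 0 := by
  intro h
  rw [sub_eq_zero.mp h] at ht
  linarith

lemma H_eq {n : ℕ} {t : ℂ} (ht : ‖t‖ = 1) {z : Fin n → ℂ} (hz : ∀ j, ‖z j‖ < 1) :
    H t (sp z) = ∑ j, (t + z j) / (t - z j) := by
  have h1 : Q t (sp z) / P t (sp z) = ∑ j, 1 / (t - z j) := by
    rw [P_eq, Q_eq, Finset.sum_div]
    apply Finset.sum_congr rfl
    intro i _
    have hne : ∏ j ∈ Finset.univ.erase i, (t - z j) ≠ 0 :=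
      Finset.prod_ne_zero_iff.mpr fun j _ => ne_of ht (hz j)
    rw [← Finset.mul_prod_erase _ _ (Finset.mem_univ i)]
    have := ne_of ht (hz i)
    field_simp
  rw [H, h1, Finset.mul_sum]
  have : (n : ℂ) = ∑ j : Fin n, 1 := by simp
  rw [this, ← Finset.sum_sub_distrib]
  apply Finset.sum_congr rfl
  intro j _
  have := ne_of ht (hz j)
  field_simp
  ring

lemma H_diff {n : ℕ} {t : ℂ} (ht : ‖t‖ = 1) :
    DifferentiableOn ℂ (H (n := n) t) (symmetrizedPolydisc n) := by
  have hP : Differentiable ℂ (P (n := n) t) := by unfold P; fun_prop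
  have hQ : Differentiable ℂ (Q (n := n) t) := by unfold Q; fun_prop
  unfold H
  apply DifferentiableOn.sub_const
  apply DifferentiableOn.const_mul
  simp only [div_eq_mul_inv]
  refine hQ.differentiableOn.fun_mul (DifferentiableOn.fun_inv hP.differentiableOn ?_)
  intro w hw
  obtain ⟨z, hz, rfl⟩ := mem_iff hw
  rw [P_eq]
  exact Finset.prod_ne_zero_iff.mpr fun j _ => ne_of ht (hz j)

lemma H_pos {n : ℕ} (hn : 0 < n) {t : ℂ} (ht : ‖t‖ = 1) : ∀ w ∈ symmetrizedPolydisc n, 0 < (H t w).re := by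
  intro w hw
  obtain ⟨z, hz, rfl⟩ := mem_iff hw
  rw [H_eq ht hz, Complex.re_sum]
  have : Nonempty (Fin n) := ⟨⟨0, hn⟩⟩
  apply Finset.sum_pos _ Finset.univ_nonempty
  intro j _
  have hne := ne_of ht (hz j)
  have h1 : Complex.normSq t = 1 := by rw [← Complex.sq_norm, ht]; norm_num
  have h2 : Complex.normSq (z j) < 1 := by
    rw [← Complex.sq_norm]; nlinarith [norm_nonneg (z j), hz j]
  rw [Complex.div_re, ← add_div]
  apply div_pos _ (Complex.normSq_pos.mpr hne)
  rw [Complex.normSq_apply] at h1 h2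
  simp
  nlinarith

/-- Cayley transform -/
noncomputable def Cy (s : ℂ) : ℂ := (1 - s) / (1 + s)

lemma Cy_ne {s : ℂ} (hs : 0 < s.re) : 1 + s ≠ 0 := by
  intro h
  have := congrArg Complex.re h
  simp at this
  linarith

lemma Cy_lt {s : ℂ} (hs : 0 < s.re) : ‖Cy s‖ < 1 := by
  rw [Cy, norm_div, div_lt_one (norm_pos_iff.mpr (Cy_ne hs)),
   ← sq_lt_sq₀ (norm_nonneg _) (norm_nonneg _), Complex.sq_norm, Complex.sq_norm,
      Complex.normSq_apply, Complex.normSq_apply]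
  simp
  nlinarith

lemma Cy_ne' {s : ℂ} (hs : ‖s‖ < 1) : 1 + s ≠ 0 := by
  have := ne_of (t := 1) (z := -s) (by simp) (by simpa using hs)
  simpa using this

lemma Cy_pos {s : ℂ} (hs : ‖s‖ < 1) : 0 < (Cy s).re := by
  have hne := Cy_ne' hs
  have h2 : Complex.normSq s < 1 := by
    rw [← Complex.sq_norm]; nlinarith [norm_nonneg s]
  rw [Cy, Complex.div_re, ← add_div]
  apply div_pos _ (Complex.normSq_pos.mpr hne)
  rw [Complex.normSq_apply] at h2
  simp
  nlinarith

lemma Cy_Cy {s : ℂ} (hs : 1 + s ≠ 0) : Cy (Cy s) = s := by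
  unfold Cy
  have : 1 + (1 - s) / (1 + s) = 2 / (1 + s) := by field_simp; ring
  rw [this]
  field_simp
  ring

lemma Cy_neg_Cy {s : ℂ} (hs : 1 + s ≠ 0) (h0 : s ≠ 0) : Cy (-Cy s) = s⁻¹ := by
  unfold Cy
  have : 1 + -((1 - s) / (1 + s)) = 2 * s / (1 + s) := by field_simp; ring
  rw [this]
  field_simp
  ring

noncomputable def vec (m : ℕ) (a b : ℂ) : Fin (m + 2) → ℂ :=
  Fin.cons (Cy a) (Fin.cons (-Cy b) fun _ => 0)

lemma vec_lt {m : ℕ} {a b : ℂ} (ha : 0 < a.re) (hb : 0 < b.re) (j) : ‖vec m a b j‖ < 1 := by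
  refine Fin.cases ?_ (fun j => Fin.cases ?_ (fun j => ?_) j) j
  · simpa [vec] using Cy_lt ha
  · simpa [vec] using Cy_lt hb
  · simp [vec]

noncomputable def pt (m : ℕ) (a b : ℝ) : EuclideanSpace ℂ (Fin (m + 2)) := sp (vec m a b)

lemma pt_mem (m : ℕ) {a b : ℝ} (ha : 0 < a) (hb : 0 < b) :
    pt m a b ∈ symmetrizedPolydisc (m + 2) := sp_mem (vec_lt (by simpa) (by simpa))

lemma cyfrac {s : ℝ} (hs : 0 < s) : (1 + Cy s) / (1 - Cy s) = ((s⁻¹ : ℝ) : ℂ) := by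
  have h1 : (1 + (s:ℂ)) ≠ 0 := Cy_ne (by simpa)
  have h0 : (s:ℂ) ≠ 0 := by exact_mod_cast hs.ne'
  have e := Cy_neg_Cy h1 h0
  rw [Cy] at e
  push_cast
  rw [← e]
  congr 1; ring

lemma cyfrac' {s : ℝ} (hs : 0 < s) : (1 - Cy s) / (1 + Cy s) = (s : ℂ) := by
  have h1 : (1 + (s:ℂ)) ≠ 0 := Cy_ne (by simpa)
  exact Cy_Cy h1

lemma H1_pt (m : ℕ) {a b : ℝ} (ha : 0 < a) (hb : 0 < b) :
    (H 1 (pt m a b)).re = a⁻¹ + b + m := by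
  rw [pt, H_eq (by simp) (vec_lt (by simpa) (by simpa)), Fin.sum_univ_succ, Fin.sum_univ_succ]
  simp only [vec, Fin.cons_zero, Fin.cons_succ]
  have e2 : (1 + -Cy (b:ℂ)) / (1 - -Cy (b:ℂ)) = b := by
    refine Eq.trans ?_ (cyfrac' hb); congr 1; ring
  rw [cyfrac ha, e2]
  simp only [Complex.add_re, Complex.ofReal_re]
  simp
  ring

lemma H2_pt (m : ℕ) {a b : ℝ} (ha : 0 < a) (hb : 0 < b) :
    (H (-1) (pt m a b)).re = b⁻¹ + a + m := by
  rw [pt, H_eq (by simp) (vec_lt (by simpa) (by simpa)), Fin.sum_univ_succ, Fin.sum_univ_succ]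
  simp only [vec, Fin.cons_zero, Fin.cons_succ]
  have e1 : (-1 + Cy (a:ℂ)) / (-1 - Cy (a:ℂ)) = a := by
    refine Eq.trans ?_ (cyfrac' ha); rw [← neg_div_neg_eq]; congr 1 <;> ring
  have e2 : (-1 + -Cy (b:ℂ)) / (-1 - -Cy (b:ℂ)) = ((b⁻¹ : ℝ) : ℂ) := by
    refine Eq.trans ?_ (cyfrac hb); rw [← neg_div_neg_eq]; congr 1 <;> ring
  rw [e1, e2]
  simp only [Complex.add_re, Complex.ofReal_re]
  simp
  ring

/-- the adjacent-pair discs -/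
lemma adj (m : ℕ) {ε : ℝ} (h0 : 0 < ε) (h1 : ε < 1) {a b a' b' : ℝ} (ha : 0 < a) (hb : 0 < b)
    (haa : a' = a * ε ∨ a = a' * ε) (hbb : b' = b * ε ∨ b = b' * ε) :
    ∃ α : ℂ, ‖α‖ < 1 ∧ artanh ‖α‖ = Real.log ε⁻¹ / 2 ∧
    (∃ φ : ℂ → EuclideanSpace ℂ (Fin (m + 2)), DifferentiableOn ℂ φ (ball 0 1) ∧
      MapsTo φ (ball 0 1) (symmetrizedPolydisc (m + 2)) ∧
      φ 0 = pt m a b ∧ φ α = pt m a' b') := by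
  have hε : 0 < (ε:ℂ).re := by simpa
  have hεn : (ε:ℂ) ≠ 0 := by exact_mod_cast h0.ne'
  have sgn : ∀ {a a' : ℝ}, (a' = a * ε ∨ a = a' * ε) → ∃ σ : ℂ, ‖σ‖ = 1 ∧
      (a:ℂ) * Cy (σ * Cy ε) = a' := by
    rintro a a' (h | h)
    · exact ⟨1, by simp, by rw [one_mul, Cy_Cy (Cy_ne hε), h]; push_cast; rfl⟩
    · refine ⟨-1, by simp, ?_⟩
      rw [neg_one_mul, Cy_neg_Cy (Cy_ne hε) hεn, h]; push_cast; field_simp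
  obtain ⟨σ, hσ, eσ⟩ := sgn haa
  obtain ⟨τ, hτ, eτ⟩ := sgn hbb
  have hdisc : ∀ {σ : ℂ}, ‖σ‖ = 1 → ∀ {a : ℝ}, 0 < a → ∀ ζ ∈ ball (0:ℂ) 1,
      ‖σ * ζ‖ < 1 ∧ 0 < ((a:ℂ) * Cy (σ * ζ)).re := by
    intro σ hσ a ha ζ hζ
    have h : ‖σ * ζ‖ < 1 := by rw [norm_mul, hσ, one_mul]; simpa using hζ
    refine ⟨h, ?_⟩
    rw [Complex.re_ofReal_mul]
    exact mul_pos ha (Cy_pos h)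
  have hdd : ∀ {σ : ℂ}, ‖σ‖ = 1 → ∀ {a : ℝ}, 0 < a →
      DifferentiableOn ℂ (fun ζ => Cy ((a:ℂ) * Cy (σ * ζ))) (ball 0 1) := by
    intro σ hσ a ha
    have h1 : DifferentiableOn ℂ (fun ζ => (a:ℂ) * Cy (σ * ζ)) (ball 0 1) := by
      apply DifferentiableOn.const_mul
      unfold Cy
      apply DifferentiableOn.fun_div (by fun_prop) (by fun_prop)
      intro ζ hζ
      exact Cy_ne' (hdisc hσ ha ζ hζ).1
    change DifferentiableOn ℂ (fun ζ => (1 - (a:ℂ) * Cy (σ * ζ)) / (1 + (a:ℂ) * Cy (σ * ζ))) _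
    apply DifferentiableOn.fun_div (h1.const_sub _) (h1.const_add _)
    intro ζ hζ
    exact Cy_ne (hdisc hσ ha ζ hζ).2
  refine ⟨Cy ε, Cy_lt hε, ?_, fun ζ => sp (vec m (a * Cy (σ * ζ)) (b * Cy (τ * ζ))),
    ?_, ?_, ?_, ?_⟩
  · have : ‖Cy (ε:ℂ)‖ = (1 - ε) / (1 + ε) := by
      have : Cy (ε:ℂ) = (((1 - ε) / (1 + ε) : ℝ) : ℂ) := by unfold Cy; push_cast; rfl
      rw [this, Complex.norm_real, Real.norm_of_nonneg (div_nonneg (by linarith) (by linarith))]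
    rw [this, artanh]
    congr 2
    have h2 : 1 + (1 - ε) / (1 + ε) = 2 / (1 + ε) := by field_simp; ring
    have h3 : 1 - (1 - ε) / (1 + ε) = 2 * ε / (1 + ε) := by field_simp; ring
    rw [h2, h3]
    field_simp
  · apply sp_diff
    intro j
    refine Fin.cases ?_ (fun j => Fin.cases ?_ (fun j => ?_) j) j
    · simpa [vec] using hdd hσ ha
    · simpa [vec] using (hdd hτ hb).neg
    · simp [vec]
  · intro ζ hζ
    exact sp_mem (vec_lt (hdisc hσ ha ζ hζ).2 (hdisc hτ hb ζ hζ).2)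
  · simp [pt, Cy]
  · simp only [pt, eσ, eτ]

lemma opp (m : ℕ) {ε : ℝ} (h0 : 0 < ε) (h1 : ε < 1) :
    Real.log ε⁻¹ - Real.log (m + 2) / 2 ≤
      (Real.log ((ε^3)⁻¹ + ε^2 + m) - Real.log (ε⁻¹ + ε^2 + m)) / 2 := by
  have hi : 1 < ε⁻¹ := (one_lt_inv₀ h0).mpr h1
  have hm : (0:ℝ) ≤ m := Nat.cast_nonneg m
  have he : ε^2 ≤ 1 := by nlinarith
  have a1 : Real.log ((ε^3)⁻¹) ≤ Real.log ((ε^3)⁻¹ + ε^2 + m) :=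
    Real.log_le_log (by positivity) (by nlinarith [sq_nonneg ε])
  have a2 : Real.log (ε⁻¹ + ε^2 + m) ≤ Real.log (ε⁻¹ * (m + 2)) :=
    Real.log_le_log (by positivity) (by nlinarith)
  rw [Real.log_mul (by positivity) (by positivity)] at a2
  have a3 : Real.log ((ε^3)⁻¹) = 3 * Real.log ε⁻¹ := by
    rw [← inv_pow, Real.log_pow]; norm_num
  linarith

lemma main (m : ℕ) (d : EuclideanSpace ℂ (Fin (m+2)) → EuclideanSpace ℂ (Fin (m+2)) → ℝ)
    (hup : ∀ {z w} {α : ℂ}, ‖α‖ < 1 → ∀ {φ : ℂ → EuclideanSpace ℂ (Fin (m+2))},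
      DifferentiableOn ℂ φ (ball 0 1) → MapsTo φ (ball 0 1) (symmetrizedPolydisc (m+2)) →
      φ 0 = z → φ α = w → d z w ≤ artanh ‖α‖)
    (hlo : ∀ {t : ℂ}, ‖t‖ = 1 → ∀ {z w}, z ∈ symmetrizedPolydisc (m+2) →
      w ∈ symmetrizedPolydisc (m+2) →
      |Real.log (H t w).re - Real.log (H t z).re| / 2 ≤ d z w) :
    ¬ GromovHyperbolicWith (symmetrizedPolydisc (m+2)) d := by
  rintro ⟨C, hC⟩
  obtain ⟨ε, h0, h1, hL⟩ : ∃ ε : ℝ, 0 < ε ∧ ε < 1 ∧ C + Real.log (m+2) < Real.log ε⁻¹ := by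
    set M := |C + Real.log (m+2)| + 1 with hM
    refine ⟨Real.exp (-M), Real.exp_pos _, ?_, ?_⟩
    · rw [Real.exp_lt_one_iff]; have := abs_nonneg (C + Real.log (m+2)); linarith
    · rw [← Real.exp_neg, Real.log_exp, neg_neg]
      have := le_abs_self (C + Real.log (m+2)); linarith
  have e2 : 0 < ε^2 := by positivity
  have e3 : 0 < ε^3 := by positivity
  have up : ∀ {a b a' b' : ℝ}, 0 < a → 0 < b → (a' = a * ε ∨ a = a' * ε) →
      (b' = b * ε ∨ b = b' * ε) → d (pt m a b) (pt m a' b') ≤ Real.log ε⁻¹ / 2 := by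
    intro a b a' b' ha hb haa hbb
    obtain ⟨α, g1, g2, φ, g3, g4, g5, g6⟩ := adj m h0 h1 ha hb haa hbb
    rw [← g2]
    exact hup g1 g3 g4 g5 g6
  have o := opp m h0 h1
  have pq := hlo (t := 1) (by simp) (pt_mem m h0 e2) (pt_mem m e3 e2)
  have xw := hlo (t := -1) (by simp) (pt_mem m e2 h0) (pt_mem m e2 e3)
  have wx := hlo (t := -1) (by simp) (pt_mem m e2 e3) (pt_mem m e2 h0)
  rw [H1_pt m h0 e2, H1_pt m e3 e2] at pq
  rw [H2_pt m e2 h0, H2_pt m e2 e3] at xw wx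
  rw [abs_sub_comm] at wx
  have ab := le_abs_self (Real.log ((ε^3)⁻¹ + ε^2 + m) - Real.log (ε⁻¹ + ε^2 + m))
  have px := up (a' := ε^2) (b' := ε) h0 e2 (by left; ring) (by right; ring)
  have wq := up (a' := ε^3) (b' := ε^2) e2 e3 (by left; ring) (by right; ring)
  have xq := up (a' := ε^3) (b' := ε^2) e2 h0 (by left; ring) (by left; ring)
  have pw := up (a' := ε^2) (b' := ε^3) h0 e2 (by left; ring) (by left; ring)
  have := hC _ (pt_mem m h0 e2) _ (pt_mem m e3 e2) _ (pt_mem m e2 h0) _ (pt_mem m e2 e3)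
  rw [sub_le_iff_le_add, min_le_iff] at this
  rcases this with h | h <;> linarith

end SPD

/-- **Proposition 3.** For `n ≥ 2` the symmetrized polydisc `𝔾ₙ` is not Gromov
hyperbolic with respect to the Carathéodory distance, nor with respect to the
Kobayashi distance. -/
theorem symmetrizedPolydisc_not_gromov_hyperbolic (n : ℕ) (hn : 2 ≤ n) :
    ¬ GromovHyperbolicWith (symmetrizedPolydisc n) (caratheodory (symmetrizedPolydisc n)) ∧
      ¬ GromovHyperbolicWith (symmetrizedPolydisc n) (kobayashi (symmetrizedPolydisc n)) := by
  obtain ⟨m, rfl⟩ : ∃ m, n = m + 2 := ⟨n - 2, by omega⟩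
  refine ⟨SPD.main m _ SPD.carath_le fun ht _ _ hz hw => ?_,
    SPD.main m _ SPD.kob_le fun ht _ _ hz hw => ?_⟩
  · exact SPD.le_carath (SPD.H_diff ht) (SPD.H_pos (by omega) ht) (SPD.joined _) hz hw
  · exact SPD.le_kob (SPD.H_diff ht) (SPD.H_pos (by omega) ht) (SPD.joined _) hz hw
end

section
/- The tetrablock 𝔼 is not Gromov hyperbolic with respect to its Kobayashi distance k_𝔼. -/
open Metric Set

/-- The tetrablock `𝔼 ⊆ ℂ³`: the image of the symmetric `2 × 2` matrices of operator
norm `< 1` under `(z₁₁, z₂₂, z) ↦ (z₁₁, z₂₂, z₁₁ z₂₂ − z²)`. -/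
def tetrablock : Set (EuclideanSpace ℂ (Fin 3)) :=
  { w | ∃ z₁₁ z₂₂ z : ℂ,
      ‖Matrix.toEuclideanCLM (𝕜 := ℂ) (Matrix.of ![![z₁₁, z], ![z, z₂₂]])‖ < 1 ∧
      w 0 = z₁₁ ∧ w 1 = z₂₂ ∧ w 2 = z₁₁ * z₂₂ - z ^ 2 }


noncomputable def tbU (z : ℂ) : ℝ := ((1 + z) / (1 - z)).re

lemma tb_one_sub_ne {z : ℂ} (hz : ‖z‖ < 1) : 1 - z ≠ 0 := by
  intro h
  have : z = 1 := (sub_eq_zero.mp h).symm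
  simp [this] at hz

lemma tbU_pos {z : ℂ} (hz : ‖z‖ < 1) : 0 < tbU z := by
  have h1 := tb_one_sub_ne hz
  have h2 : 0 < Complex.normSq (1 - z) := Complex.normSq_pos.mpr h1
  have h3 : Complex.normSq z < 1 := by
    rw [Complex.normSq_eq_norm_sq]
    have := norm_nonneg z
    nlinarith
  rw [Complex.normSq_apply] at h3
  unfold tbU
  rw [Complex.div_re, ← add_div]
  apply div_pos _ h2
  simp
  nlinarith

lemma tb_harnack_aux {g : ℂ → ℂ} (hg : DifferentiableOn ℂ g (ball 0 1))
    (hpos : ∀ z ∈ ball (0 : ℂ) 1, 0 < (g z).re) {α : ℂ} (hα : ‖α‖ < 1) :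
    |(g α).re - (g 0).re| ≤ ‖α‖ * ((g α).re + (g 0).re) := by
  have h0 : (0 : ℂ) ∈ ball (0 : ℂ) 1 := by simp
  have hne : ∀ z ∈ ball (0 : ℂ) 1, g z + (starRingEnd ℂ) (g 0) ≠ 0 := by
    intro z hz h
    have := congrArg Complex.re h
    simp at this
    linarith [hpos z hz, hpos 0 h0]
  have key := Complex.norm_le_norm_of_mapsTo_ball (R := 1) (z := α)
    (f := fun z => (g z - g 0) / (g z + (starRingEnd ℂ) (g 0)))
    ((hg.sub_const _).div (hg.add_const _) hne) ?_ (by simp) hα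
  · have hα' : α ∈ ball (0 : ℂ) 1 := by simpa using hα
    rw [norm_div, div_le_iff₀ (norm_pos_iff.mpr (hne α hα'))] at key
    have k2 : ‖g α - g 0‖ ^ 2 ≤ (‖α‖ * ‖g α + (starRingEnd ℂ) (g 0)‖) ^ 2 :=
      pow_le_pow_left₀ (norm_nonneg _) key 2
    rw [mul_pow, ← Complex.normSq_eq_norm_sq (g α - g 0),
      ← Complex.normSq_eq_norm_sq (g α + (starRingEnd ℂ) (g 0)),
      Complex.normSq_apply, Complex.normSq_apply] at k2
    simp at k2
    have hp1 := hpos α hα'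
    have hp0 := hpos 0 h0
    have hn := norm_nonneg α
    apply abs_le_of_sq_le_sq _ (by positivity)
    nlinarith [mul_nonneg (by nlinarith : 0 ≤ 1 - ‖α‖ ^ 2) (sq_nonneg ((g α).im - (g 0).im))]
  · intro z hz
    have hp1 := hpos z hz
    have hp0 := hpos 0 h0
    simp only [mem_closedBall, dist_zero_right]
    rw [norm_div, div_le_one (norm_pos_iff.mpr (hne z hz))]
    apply (sq_le_sq₀ (norm_nonneg _) (norm_nonneg _)).mp
    rw [← Complex.normSq_eq_norm_sq, ← Complex.normSq_eq_norm_sq,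
      Complex.normSq_apply, Complex.normSq_apply]
    simp
    nlinarith

lemma tb_harnack {f : ℂ → ℂ} (hf : DifferentiableOn ℂ f (ball 0 1))
    (hm : ∀ z ∈ ball (0 : ℂ) 1, ‖f z‖ < 1) {α : ℂ} (hα : ‖α‖ < 1) :
    |Real.log (tbU (f 0)) - Real.log (tbU (f α))| / 2 ≤ artanh ‖α‖ := by
  have h0 : (0 : ℂ) ∈ ball (0 : ℂ) 1 := by simp
  have hα' : α ∈ ball (0 : ℂ) 1 := by simpa using hα
  have key := tb_harnack_aux (g := fun z => (1 + f z) / (1 - f z))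
    ((hf.const_add _).div (hf.const_sub _) (fun z hz => tb_one_sub_ne (hm z hz)))
    (fun z hz => tbU_pos (hm z hz)) hα
  change |tbU (f α) - tbU (f 0)| ≤ ‖α‖ * (tbU (f α) + tbU (f 0)) at key
  have p1 := tbU_pos (hm _ hα')
  have p0 := tbU_pos (hm _ h0)
  have hn := norm_nonneg α
  have h1 : 0 < 1 - ‖α‖ := by linarith
  rw [abs_le] at key
  unfold artanh
  have : |Real.log (tbU (f 0)) - Real.log (tbU (f α))| ≤ Real.log ((1 + ‖α‖) / (1 - ‖α‖)) := by
    rw [abs_le]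
    constructor
    · rw [neg_le, neg_sub, ← Real.log_div p1.ne' p0.ne']
      apply Real.log_le_log (by positivity)
      rw [div_le_div_iff₀ p0 h1]
      nlinarith
    · rw [← Real.log_div p0.ne' p1.ne']
      apply Real.log_le_log (by positivity)
      rw [div_le_div_iff₀ p1 h1]
      nlinarith
  linarith

lemma artanh_nonneg' {x : ℝ} (h0 : 0 ≤ x) (h1 : x < 1) : 0 ≤ artanh x := by
  unfold artanh
  apply div_nonneg _ zero_le_two
  apply Real.log_nonneg
  rw [le_div_iff₀ (by linarith)]
  linarith

/-- A thin disc around the segment `[0,1]`. -/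
lemma tb_thin {ε : ℝ} (hε : 0 < ε) : ∃ (f : ℂ → ℂ) (α : ℂ), ‖α‖ < 1 ∧
    DifferentiableOn ℂ f (ball 0 1) ∧ f 0 = 0 ∧ f α = 1 ∧
    ∀ z ∈ ball (0 : ℂ) 1, ∃ τ : ℝ, 0 ≤ τ ∧ τ ≤ 1 ∧ ‖f z - τ‖ ≤ ε := by
  obtain ⟨c, hc, hcε⟩ : ∃ c : ℝ, 0 < c ∧ 3 * c = ε := ⟨ε / 3, by positivity, by ring⟩
  set s : ℝ := 1 - Real.exp (-(1 / c) - 1) with hs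
  have hc' : 0 < 1 / c := by positivity
  have e1 : Real.exp (-(1 / c) - 1) < Real.exp (-(1 / c)) := Real.exp_lt_exp.mpr (by linarith)
  have e2 : Real.exp (-(1 / c)) < 1 := by
    rw [Real.exp_lt_one_iff]; linarith
  have e0 := Real.exp_pos (-(1 / c) - 1)
  have e0' := Real.exp_pos (-(1 / c))
  have hs0 : 0 < s := by linarith
  have hs1 : s < 1 := by linarith
  have hre : ∀ z ∈ ball (0 : ℂ) 1, 0 < (1 - (s : ℂ) * z).re := by
    intro z hz
    have hz' : ‖z‖ < 1 := by simpa using hz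
    have := Complex.re_le_norm z
    simp
    nlinarith
  have hsa : (s : ℂ) * (((1 - Real.exp (-(1 / c))) / s : ℝ) : ℂ) = ((1 - Real.exp (-(1 / c)) : ℝ) : ℂ) := by
    rw [← Complex.ofReal_mul, mul_div_cancel₀ _ hs0.ne']
  refine ⟨fun z => -(c : ℂ) * Complex.log (1 - s * z), (((1 - Real.exp (-(1 / c))) / s : ℝ) : ℂ),
    ?_, ?_, by simp, ?_, ?_⟩
  · rw [Complex.norm_real, Real.norm_eq_abs, abs_of_nonneg (div_nonneg (by linarith) hs0.le),
      div_lt_one hs0]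
    linarith
  · apply DifferentiableOn.const_mul
    apply DifferentiableOn.clog
    · fun_prop
    · intro z hz
      exact Or.inl (hre z hz)
  · simp only [hsa]
    have : (1 : ℂ) - ((1 - Real.exp (-(1 / c)) : ℝ) : ℂ) = ((Real.exp (-(1 / c)) : ℝ) : ℂ) := by
      push_cast; ring
    rw [this, ← Complex.ofReal_log e0'.le, Real.log_exp]
    have : (c : ℂ) ≠ 0 := by exact_mod_cast hc.ne'
    push_cast
    field_simp
  · intro z hz
    have hz' : ‖z‖ < 1 := by simpa using hz
    set w : ℂ := 1 - (s : ℂ) * z with hw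
    have hwre : 0 < w.re := hre z hz
    have hsz : ‖(s : ℂ) * z‖ ≤ s := by
      rw [norm_mul, Complex.norm_real, Real.norm_eq_abs, abs_of_pos hs0]
      nlinarith
    have hwlo : 1 - s ≤ ‖w‖ := by
      have := norm_sub_norm_le (1 : ℂ) ((s : ℂ) * z)
      rw [norm_one] at this
      linarith
    have hwhi : ‖w‖ ≤ 2 := by
      have := norm_sub_le (1 : ℂ) ((s : ℂ) * z)
      rw [norm_one] at this
      linarith
    have hwpos : 0 < ‖w‖ := by linarith
    have l1 : -(1 / c) - 1 ≤ Real.log ‖w‖ := by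
      rw [Real.le_log_iff_exp_le hwpos]
      linarith
    have l2 : Real.log ‖w‖ ≤ 1 := by
      have := Real.log_le_sub_one_of_pos hwpos
      linarith
    have him : |(Complex.log w).im| ≤ 2 := by
      rw [Complex.log_im]
      have := Complex.abs_arg_le_pi_div_two_iff.mpr hwre.le
      linarith [Real.pi_lt_four]
    have hcl : c * (-(1 / c) - 1) = -1 - c := by field_simp
    have m1 : -1 - c ≤ c * Real.log ‖w‖ := by
      rw [← hcl]; exact mul_le_mul_of_nonneg_left l1 hc.le
    have m2 : c * Real.log ‖w‖ ≤ c := by nlinarith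
    obtain ⟨τ, t0, t1, t2⟩ : ∃ τ : ℝ, 0 ≤ τ ∧ τ ≤ 1 ∧ |-(c * Real.log ‖w‖) - τ| ≤ c := by
      by_cases ha : -(c * Real.log ‖w‖) < 0
      · exact ⟨0, le_rfl, zero_le_one, abs_le.mpr ⟨by linarith, by linarith⟩⟩
      · by_cases hb : -(c * Real.log ‖w‖) ≤ 1
        · exact ⟨-(c * Real.log ‖w‖), by linarith, hb, by simp [hc.le]⟩
        · exact ⟨1, zero_le_one, le_rfl, abs_le.mpr ⟨by linarith, by linarith⟩⟩
    refine ⟨τ, t0, t1, ?_⟩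
    refine (Complex.norm_le_abs_re_add_abs_im _).trans ?_
    have r1 : (-(c : ℂ) * Complex.log w - (τ : ℂ)).re = -(c * Real.log ‖w‖) - τ := by
      simp [Complex.log_re]
    have r2 : (-(c : ℂ) * Complex.log w - (τ : ℂ)).im = -(c * (Complex.log w).im) := by
      simp
    rw [r1, r2, abs_neg, abs_mul, abs_of_pos hc]
    nlinarith

lemma tb_disc {z w : EuclideanSpace ℂ (Fin 3)} (hz : z ∈ tetrablock) (hw : w ∈ tetrablock) :
    ∃ α : ℂ, ‖α‖ < 1 ∧ ∃ φ : ℂ → EuclideanSpace ℂ (Fin 3),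
      DifferentiableOn ℂ φ (ball 0 1) ∧ MapsTo φ (ball 0 1) tetrablock ∧ φ 0 = z ∧ φ α = w := by
  obtain ⟨a, b, x, hn, ha, hb, hx⟩ := hz
  obtain ⟨a', b', x', hn', ha', hb', hx'⟩ := hw
  set A := Matrix.toEuclideanCLM (𝕜 := ℂ) (Matrix.of ![![a, x], ![x, b]]) with hA
  set B := Matrix.toEuclideanCLM (𝕜 := ℂ) (Matrix.of ![![a', x'], ![x', b']]) with hB
  obtain ⟨ρ, hρA, hρB, hρ⟩ : ∃ ρ : ℝ, ‖A‖ ≤ ρ ∧ ‖B‖ ≤ ρ ∧ ρ < 1 :=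
    ⟨max ‖A‖ ‖B‖, le_max_left _ _, le_max_right _ _, max_lt hn hn'⟩
  obtain ⟨f, α, hα, hf, f0, f1, hf2⟩ := tb_thin (ε := (1 - ρ) / (‖B - A‖ + 1))
    (div_pos (by linarith) (by positivity))
  refine ⟨α, hα, fun t => !₂[a + f t * (a' - a), b + f t * (b' - b),
    (a + f t * (a' - a)) * (b + f t * (b' - b)) - (x + f t * (x' - x)) ^ 2], ?_, ?_, ?_, ?_⟩
  · rw [differentiableOn_euclidean]
    intro i
    fin_cases i <;> simp <;> fun_prop
  · intro t ht
    refine ⟨a + f t * (a' - a), b + f t * (b' - b), x + f t * (x' - x), ?_, rfl, rfl, rfl⟩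
    have hM : Matrix.toEuclideanCLM (𝕜 := ℂ) (Matrix.of ![![a + f t * (a' - a), x + f t * (x' - x)],
        ![x + f t * (x' - x), b + f t * (b' - b)]]) = A + f t • (B - A) := by
      rw [hA, hB, ← map_sub, ← map_smul, ← map_add]
      congr 1
      ext i j
      fin_cases i <;> fin_cases j <;> simp
    rw [hM]
    obtain ⟨τ, t0, t1, hτ⟩ := hf2 t ht
    have hsplit : A + f t • (B - A) =
        (((1 - τ : ℝ) : ℂ) • A + (τ : ℂ) • B) + (f t - τ) • (B - A) := by
      push_cast
      module
    rw [hsplit]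
    have n1 : ‖((1 - τ : ℝ) : ℂ) • A‖ ≤ (1 - τ) * ρ := by
      rw [norm_smul, Complex.norm_real, Real.norm_eq_abs, abs_of_nonneg (by linarith)]
      exact mul_le_mul_of_nonneg_left hρA (by linarith)
    have n2 : ‖(τ : ℂ) • B‖ ≤ τ * ρ := by
      rw [norm_smul, Complex.norm_real, Real.norm_eq_abs, abs_of_nonneg t0]
      exact mul_le_mul_of_nonneg_left hρB t0
    have n3 : ‖(f t - τ) • (B - A)‖ < 1 - ρ := by
      rw [norm_smul]
      have hp : 0 < ‖B - A‖ + 1 := by positivity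
      calc ‖f t - τ‖ * ‖B - A‖ ≤ (1 - ρ) / (‖B - A‖ + 1) * ‖B - A‖ :=
            mul_le_mul_of_nonneg_right hτ (norm_nonneg _)
        _ < 1 - ρ := by
            rw [div_mul_eq_mul_div, div_lt_iff₀ hp]
            nlinarith
    have n4 := norm_add_le (((1 - τ : ℝ) : ℂ) • A + (τ : ℂ) • B) ((f t - τ) • (B - A))
    have n5 := norm_add_le (((1 - τ : ℝ) : ℂ) • A) ((τ : ℂ) • B)
    linarith
  · ext i
    fin_cases i <;> simp [f0, ha, hb, hx]
  · ext i
    fin_cases i <;> simp [f1, ha', hb', hx']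

lemma tb_coord {w : EuclideanSpace ℂ (Fin 3)} (hw : w ∈ tetrablock) :
    ‖w 0‖ < 1 ∧ ‖w 1‖ < 1 := by
  obtain ⟨a, b, x, hn, ha, hb, hx⟩ := hw
  rw [ha, hb]
  have gen : ∀ i : Fin 2, ‖(Matrix.of ![![a, x], ![x, b]]) i i‖ ≤
      ‖Matrix.toEuclideanCLM (𝕜 := ℂ) (Matrix.of ![![a, x], ![x, b]])‖ := by
    intro i
    have h1 := (Matrix.toEuclideanCLM (𝕜 := ℂ)
      (Matrix.of ![![a, x], ![x, b]])).le_opNorm (EuclideanSpace.single i (1 : ℂ))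
    rw [EuclideanSpace.norm_single, norm_one, mul_one] at h1
    refine le_trans ?_ h1
    have h2 := PiLp.norm_apply_le (Matrix.toEuclideanCLM (𝕜 := ℂ)
      (Matrix.of ![![a, x], ![x, b]]) (EuclideanSpace.single i (1 : ℂ))) i
    refine le_trans (le_of_eq ?_) h2
    rw [Matrix.ofLp_toEuclideanCLM]
    simp
  exact ⟨(gen 0).trans_lt hn, (gen 1).trans_lt hn⟩

open scoped Matrix.Norms.L2Operator in
lemma tb_mem {a b : ℂ} (ha : ‖a‖ < 1) (hb : ‖b‖ < 1) :
    (!₂[a, b, a * b] : EuclideanSpace ℂ (Fin 3)) ∈ tetrablock := by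
  refine ⟨a, b, 0, ?_, rfl, rfl, by simp⟩
  have : (Matrix.of ![![a, 0], ![0, b]]) = Matrix.diagonal ![a, b] := by
    ext i j
    fin_cases i <;> fin_cases j <;> simp
  rw [Matrix.l2_opNorm_toEuclideanCLM, this, Matrix.l2_opNorm_diagonal, pi_norm_lt_iff one_pos]
  intro i
  fin_cases i <;> simpa

lemma tb_lempert_nonneg (z w : EuclideanSpace ℂ (Fin 3)) : 0 ≤ lempert tetrablock z w := by
  apply Real.sInf_nonneg
  rintro r ⟨α, hα, _, rfl⟩
  exact artanh_nonneg' (norm_nonneg _) hα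

lemma tb_lempert_le {α : ℂ} (hα : ‖α‖ < 1) {φ : ℂ → EuclideanSpace ℂ (Fin 3)}
    (h1 : DifferentiableOn ℂ φ (ball 0 1)) (h2 : MapsTo φ (ball 0 1) tetrablock) :
    lempert tetrablock (φ 0) (φ α) ≤ artanh ‖α‖ := by
  apply csInf_le
  · refine ⟨0, ?_⟩
    rintro r ⟨α, hα, _, rfl⟩
    exact artanh_nonneg' (norm_nonneg _) hα
  · exact ⟨α, hα, ⟨φ, h1, h2, rfl, rfl⟩, rfl⟩

lemma tb_kob_le {α : ℂ} (hα : ‖α‖ < 1) {φ : ℂ → EuclideanSpace ℂ (Fin 3)}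
    (h1 : DifferentiableOn ℂ φ (ball 0 1)) (h2 : MapsTo φ (ball 0 1) tetrablock) :
    kobayashi tetrablock (φ 0) (φ α) ≤ artanh ‖α‖ := by
  refine le_trans (csInf_le ?_ ?_) (tb_lempert_le hα h1 h2)
  · refine ⟨0, ?_⟩
    rintro r ⟨m, c, _, _, _, rfl⟩
    exact Finset.sum_nonneg fun i _ => tb_lempert_nonneg _ _
  · refine ⟨1, fun i => if i = 0 then φ 0 else φ α, by simp, by simp, ?_, by simp⟩
    intro i _
    by_cases hi : i = 0
    · simpa [hi] using h2 (by simp : (0 : ℂ) ∈ ball (0 : ℂ) 1)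
    · simpa [hi] using h2 (by simpa using hα : α ∈ ball (0 : ℂ) 1)

lemma tb_le_lempert (j : Fin 3) (hj : ∀ w ∈ tetrablock, ‖w j‖ < 1)
    {z w : EuclideanSpace ℂ (Fin 3)} (hz : z ∈ tetrablock) (hw : w ∈ tetrablock) :
    |Real.log (tbU (z j)) - Real.log (tbU (w j))| / 2 ≤ lempert tetrablock z w := by
  apply le_csInf
  · obtain ⟨α, hα, h⟩ := tb_disc hz hw
    exact ⟨_, α, hα, h, rfl⟩
  · rintro r ⟨α, hα, ⟨φ, h1, h2, rfl, rfl⟩, rfl⟩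
    exact tb_harnack (f := fun t => φ t j) (differentiableOn_euclidean.mp h1 j)
      (fun t ht => hj _ (h2 ht)) hα

lemma tb_le_kob (j : Fin 3) (hj : ∀ w ∈ tetrablock, ‖w j‖ < 1)
    {z w : EuclideanSpace ℂ (Fin 3)} (hz : z ∈ tetrablock) (hw : w ∈ tetrablock) :
    |Real.log (tbU (z j)) - Real.log (tbU (w j))| / 2 ≤ kobayashi tetrablock z w := by
  apply le_csInf
  · refine ⟨_, 1, fun i => if i = 0 then z else w, by simp, by simp, ?_, rfl⟩
    intro i _
    by_cases hi : i = 0 <;> simpa [hi]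
  · rintro r ⟨m, c, rfl, rfl, hc, rfl⟩
    have : ∀ n ≤ m, |Real.log (tbU (c 0 j)) - Real.log (tbU (c n j))| / 2 ≤
        ∑ i ∈ Finset.range n, lempert tetrablock (c i) (c (i + 1)) := by
      intro n
      induction n with
      | zero => intro _; simp
      | succ n ih =>
        intro hn
        rw [Finset.sum_range_succ]
        have h1 := ih (by omega)
        have h2 := tb_le_lempert j hj (hc n (by omega)) (hc (n + 1) hn)
        have h3 := abs_sub_le (Real.log (tbU (c 0 j))) (Real.log (tbU (c n j)))
          (Real.log (tbU (c (n + 1) j)))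
        linarith
    exact this m le_rfl

lemma tb_moebius {r : ℝ} (h0 : 0 < r) (h1 : r < 1) :
    DifferentiableOn ℂ (fun t : ℂ => ((r : ℂ) - t) / (1 - r * t)) (ball 0 1) ∧
    ∀ t ∈ ball (0 : ℂ) 1, ‖((r : ℂ) - t) / (1 - r * t)‖ < 1 := by
  have hne : ∀ t ∈ ball (0 : ℂ) 1, 1 - (r : ℂ) * t ≠ 0 := by
    intro t ht
    have ht' : ‖t‖ < 1 := by simpa using ht
    apply tb_one_sub_ne
    rw [norm_mul, Complex.norm_real, Real.norm_eq_abs, abs_of_pos h0]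
    nlinarith [norm_nonneg t]
  refine ⟨DifferentiableOn.div (by fun_prop) (by fun_prop) hne, ?_⟩
  intro t ht
  have ht' : ‖t‖ < 1 := by simpa using ht
  rw [norm_div, div_lt_one (norm_pos_iff.mpr (hne t ht))]
  apply lt_of_pow_lt_pow_left₀ 2 (norm_nonneg _)
  have h3 : Complex.normSq t < 1 := by
    rw [Complex.normSq_eq_norm_sq]
    have := norm_nonneg t
    nlinarith
  rw [Complex.normSq_apply] at h3
  rw [← Complex.normSq_eq_norm_sq, ← Complex.normSq_eq_norm_sq,
      Complex.normSq_apply, Complex.normSq_apply]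
  simp
  nlinarith [mul_pos (by nlinarith : 0 < 1 - r ^ 2) (sub_pos.mpr h3)]

lemma tb_bidisc_le {r : ℝ} (h0 : 0 < r) (h1 : r < 1) {f g : ℂ → ℂ}
    (hf : DifferentiableOn ℂ f (ball 0 1)) (hg : DifferentiableOn ℂ g (ball 0 1))
    (hf' : ∀ t ∈ ball (0 : ℂ) 1, ‖f t‖ < 1) (hg' : ∀ t ∈ ball (0 : ℂ) 1, ‖g t‖ < 1)
    {a b a' b' : ℂ} (ea : f 0 = a) (eb : g 0 = b) (ea' : f r = a') (eb' : g r = b') :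
    kobayashi tetrablock !₂[a, b, a * b] !₂[a', b', a' * b'] ≤ artanh r := by
  have hr : ‖(r : ℂ)‖ = r := by
    rw [Complex.norm_real, Real.norm_eq_abs, abs_of_pos h0]
  subst ea eb ea' eb'
  have := tb_kob_le (α := (r : ℂ)) (φ := fun t => !₂[f t, g t, f t * g t]) (by rwa [hr]) ?_ ?_
  · rwa [hr] at this
  · rw [differentiableOn_euclidean]
    intro i
    fin_cases i <;> simp <;> fun_prop
  · intro t ht
    exact tb_mem (hf' t ht) (hg' t ht)

lemma tbU_real (r : ℝ) : tbU r = (1 + r) / (1 - r) := by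
  unfold tbU
  have : (1 + (r : ℂ)) / (1 - r) = (((1 + r) / (1 - r) : ℝ) : ℂ) := by push_cast; rfl
  rw [this, Complex.ofReal_re]

/-- **Proposition 4.** The tetrablock `𝔼` is not Gromov hyperbolic with respect to
its Kobayashi distance. -/
theorem tetrablock_not_gromov_kobayashi_hyperbolic :
    ¬ GromovHyperbolicWith tetrablock (kobayashi tetrablock) := by
  rintro ⟨C, hC⟩
  obtain ⟨r, h0, h1, hr⟩ : ∃ r : ℝ, 0 < r ∧ r < 1 ∧ C < artanh r := by
    have hE : 1 < Real.exp (2 * (|C| + 1)) := by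
      rw [Real.one_lt_exp_iff]; positivity
    set e := Real.exp (2 * (|C| + 1)) with he
    refine ⟨(e - 1) / (e + 1), div_pos (by linarith) (by linarith), ?_, ?_⟩
    · rw [div_lt_one (by linarith)]; linarith
    · unfold artanh
      have hep : e + 1 ≠ 0 := by linarith
      have : (1 + (e - 1) / (e + 1)) / (1 - (e - 1) / (e + 1)) = e := by
        have : 1 - (e - 1) / (e + 1) = 2 / (e + 1) := by field_simp; ring
        rw [this]
        field_simp
        ring
      rw [this, he, Real.log_exp]
      linarith [le_abs_self C]
  have hrn : ‖(r : ℂ)‖ < 1 := by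
    rw [Complex.norm_real, Real.norm_eq_abs, abs_of_pos h0]; exact h1
  have hz : ‖(0 : ℂ)‖ < 1 := by simp
  have hnr : ‖-(r : ℂ)‖ < 1 := by rwa [norm_neg]
  have hp := tb_mem hrn hrn
  have hq := tb_mem hnr hrn
  have hx := tb_mem hz hrn
  have hw := tb_mem hz hz
  obtain ⟨md, mn⟩ := tb_moebius h0 h1
  have idn : ∀ t ∈ ball (0 : ℂ) 1, ‖t‖ < 1 := fun t ht => by simpa using ht
  have negn : ∀ t ∈ ball (0 : ℂ) 1, ‖-t‖ < 1 := fun t ht => by simpa using ht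
  have upx := tb_bidisc_le h0 h1 md (differentiableOn_const (r : ℂ)) mn (fun _ _ => hrn)
    (a := r) (b := r) (a' := 0) (b' := r) (by simp) rfl (by simp) rfl
  have uxq := tb_bidisc_le h0 h1 (f := fun t => -t) (g := fun _ => (r : ℂ)) (by fun_prop)
    (by fun_prop) negn (fun _ _ => hrn)
    (a := 0) (b := r) (a' := -r) (b' := r) (by simp) rfl rfl rfl
  have uwq := tb_bidisc_le h0 h1 (f := fun t => -t) (g := fun t => t) (by fun_prop)
    (by fun_prop) negn idn
    (a := 0) (b := 0) (a' := -r) (b' := r) (by simp) rfl rfl rfl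
  have upw := tb_bidisc_le h0 h1 md md mn mn
    (a := r) (b := r) (a' := 0) (b' := 0) (by simp) (by simp) (by simp) (by simp)
  have lwx := tb_le_kob 1 (fun w hw => (tb_coord hw).2) hw hx
  have lxw := tb_le_kob 1 (fun w hw => (tb_coord hw).2) hx hw
  have lpq := tb_le_kob 0 (fun w hw => (tb_coord hw).1) hp hq
  have v0 : Real.log (tbU 0) = 0 := by simp [tbU]
  have vr : Real.log (tbU r) = 2 * artanh r := by rw [tbU_real, artanh]; ring
  have vn : Real.log (tbU (-r)) = -(2 * artanh r) := by
    have : (1 + -r) / (1 - -r) = ((1 + r) / (1 - r))⁻¹ := by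
      rw [inv_div]; ring
    rw [← Complex.ofReal_neg, tbU_real, artanh, this, Real.log_inv]
    ring
  have key := hC _ hp _ hq _ hx _ hw
  have hA := artanh_nonneg' h0.le h1
  have lwx' := (show |Real.log (tbU 0) - Real.log (tbU r)| / 2 ≤ _ from lwx)
  have lxw' := (show |Real.log (tbU r) - Real.log (tbU 0)| / 2 ≤ _ from lxw)
  have lpq' := (show |Real.log (tbU r) - Real.log (tbU (-r))| / 2 ≤ _ from lpq)
  rw [v0, vr] at lwx' lxw'
  rw [vr, vn] at lpq'
  have l1 := neg_le_abs (0 - 2 * artanh r)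
  have l2 := le_abs_self (2 * artanh r - 0)
  have l3 := le_abs_self (2 * artanh r - -(2 * artanh r))
  have fin : ∀ dpw dwx dpx dxw dwq dxq dpq : ℝ, dpx ≤ artanh r → dxq ≤ artanh r →
      dwq ≤ artanh r → dpw ≤ artanh r → artanh r ≤ dwx → artanh r ≤ dxw → 2 * artanh r ≤ dpq →
      min (dpw + dwx - dpx) (dxw + dwq - dxq) - (dpw + dwq - dpq) ≤ C → False := by
    intro dpw dwx dpx dxw dwq dxq dpq a1 a2 a3 a4 a5 a6 a7 key
    rw [sub_le_iff_le_add, min_le_iff] at key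
    rcases key with k | k <;> linarith
  exact fin _ _ _ _ _ _ _ upx uxq uwq upw (le_trans (by linarith) lwx')
    (le_trans (by linarith) lxw') (le_trans (by linarith) lpq') key
end
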